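/- Let λ ≥ 2 and let θ ∈ S¹ satisfy θ ∉ Shrink_λ(h) ∪ Shrink_λ(h⁻¹) ∪ Shrink_λ(v) ∪ Shrink_λ(v⁻¹). Then for every g ∈ F₂ one has ‖θ‖ ≤ ‖ρ_λ(g)θ‖. -/

import Mathlib

noncomputable section

abbrev F2 := FreeGroup Bool

def gh : F2 := FreeGroup.of true
def gv : F2 := FreeGroup.of false

def hmat (l : ℝ) : Matrix.SpecialLinearGroup (Fin 2) ℝ :=
  ⟨!![1, l; 0, 1], by norm_num [Matrix.det_fin_two_of]⟩

def vmat (l : ℝ) : Matrix.SpecialLinearGroup (Fin 2) ℝ :=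
  ⟨!![1, 0; l, 1], by norm_num [Matrix.det_fin_two_of]⟩

def rho (l : ℝ) : F2 →* Matrix.SpecialLinearGroup (Fin 2) ℝ :=
  FreeGroup.lift fun b => if b then hmat l else vmat l

def act (l : ℝ) (g : F2) (x : Fin 2 → ℝ) : Fin 2 → ℝ :=
  (rho l g).val.mulVec x

def nrm (x : Fin 2 → ℝ) : ℝ := Real.sqrt (x 0 ^ 2 + x 1 ^ 2)

def Circ : Set (Fin 2 → ℝ) := {x | nrm x = 1}

def gens : Set F2 := {gh, gv, gh⁻¹, gv⁻¹}

def ShrinkSet (l : ℝ) (g : F2) : Set (Fin 2 → ℝ) :=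
  {x | x ∈ Circ ∧ nrm (act l g x) < 1}

def ExpSet (l : ℝ) (g : F2) : Set (Fin 2 → ℝ) :=
  {x | x ∈ Circ ∧ 1 < nrm (act l g x)}

def IsGeodesicRay (g : ℕ → F2) : Prop :=
  g 0 = 1 ∧ (∀ n, g (n + 1) * (g n)⁻¹ ∈ gens) ∧ ∀ n, g (n + 2) * (g n)⁻¹ ≠ 1

def IsGeodesicSegment (g : ℕ → F2) (N : ℕ) : Prop :=
  g 0 = 1 ∧ (∀ n, n + 1 ≤ N → g (n + 1) * (g n)⁻¹ ∈ gens) ∧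
    ∀ n, n + 2 ≤ N → g (n + 2) * (g n)⁻¹ ≠ 1

def IsShrinkingSeq (l : ℝ) (g : ℕ → F2) (θ : Fin 2 → ℝ) : Prop :=
  ∀ ε : ℝ, 0 < ε → ∃ i : ℕ, nrm (act l (g i) θ) < ε

def Shrinkable (l : ℝ) (θ : Fin 2 → ℝ) : Prop :=
  ∀ ε : ℝ, 0 < ε → ∃ g : F2, nrm (act l g θ) < ε

def Renormalizable (l : ℝ) (θ : Fin 2 → ℝ) : Prop :=
  Shrinkable l θ ∧ ∀ k : F2, ∀ c : ℝ, act l (k * (gh * gv⁻¹) * k⁻¹) θ ≠ c • θ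

abbrev SP := Bool × Bool

def Quad (s : SP) : Set (Fin 2 → ℝ) :=
  {x | (if s.1 then 0 < x 0 else x 0 < 0) ∧ (if s.2 then 0 < x 1 else x 1 < 0)}

def letterSigma : Bool × Bool → SP → SP
  | (true, true), s => (s.2, s.2)
  | (false, true), s => (s.1, s.1)
  | (true, false), s => (!s.2, s.2)
  | (false, false), s => (s.1, !s.1)

def SigmaAct (g : F2) : SP → SP :=
  (FreeGroup.toWord g).foldr (fun w acc => letterSigma w ∘ acc) id

def gammaAut : F2 →* F2 := FreeGroup.lift fun b => if b then gv⁻¹ else gh⁻¹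

def rPerm (s : SP) : SP := (!s.2, s.1)

def rPermInv (s : SP) : SP := (s.2, !s.1)

def shiftRay (g : ℕ → F2) : ℕ → F2 := fun n => g (n + 1) * (g 1)⁻¹

def TailEquiv (g g' : ℕ → F2) : Prop :=
  ∃ m n : ℕ, shiftRay^[m] g = shiftRay^[n] g'

def seqPow (a : F2) : ℕ → F2 := fun n => a ^ n

def seqPer (a b : F2) : ℕ → F2 := fun n =>
  if n % 2 = 0 then (b * a) ^ (n / 2) else a * (b * a) ^ (n / 2)

def Cond1 (g : ℕ → F2) : Prop :=
  ¬ TailEquiv g (seqPow gh) ∧ ¬ TailEquiv g (seqPow gh⁻¹) ∧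
    ¬ TailEquiv g (seqPow gv) ∧ ¬ TailEquiv g (seqPow gv⁻¹)

def Cond2 (g : ℕ → F2) : Prop :=
  ¬ TailEquiv g (seqPer gh gv⁻¹) ∧ ¬ TailEquiv g (seqPer gh⁻¹ gv)

def adjSum {V : Type} (G : SimpleGraph V) (f : V → ℝ) (v : V) : ℝ :=
  ∑ᶠ w ∈ G.neighborSet v, f w

def BoundedValance {V : Type} (G : SimpleGraph V) : Prop :=
  ∃ D : ℕ, ∀ v, (G.neighborSet v).Finite ∧ (G.neighborSet v).ncard ≤ D

def BipartWith {V : Type} (G : SimpleGraph V) (A : Set V) : Prop :=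
  ∀ v w, G.Adj v w → (v ∈ A ↔ w ∉ A)

def Hop {V : Type} (G : SimpleGraph V) (A : Set V) (k : ℤ) (f : V → ℝ) : V → ℝ :=
  fun v => f v + (k : ℝ) * Set.indicator A (adjSum G f) v

def Vop {V : Type} (G : SimpleGraph V) (A : Set V) (k : ℤ) (f : V → ℝ) : V → ℝ :=
  fun v => f v + (k : ℝ) * Set.indicator Aᶜ (adjSum G f) v

def QuadV {V : Type} (A : Set V) (s : SP) : Set (V → ℝ) :=
  {f | (∀ v ∈ A, f v = 0 ∨ (if s.1 then 0 < f v else f v < 0)) ∧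
       ∀ v, v ∉ A → f v = 0 ∨ (if s.2 then 0 < f v else f v < 0)}

def valance {V : Type} (G : SimpleGraph V) (v : V) : ℕ := (G.neighborSet v).ncard

def evec {V : Type} (v : V) : V → ℝ := Set.indicator {v} 1

def InSpoke {V : Type} (G : SimpleGraph V) (x : V) : Prop :=
  ∃ k : ℕ, 2 ≤ k ∧ ∃ c : ℕ → V,
    (∀ i j, 1 ≤ i → i ≤ k → 1 ≤ j → j ≤ k → c i = c j → i = j) ∧
    valance G (c 1) = 1 ∧
    (∀ i, 2 ≤ i → i ≤ k - 1 →
      valance G (c i) = 2 ∧ G.Adj (c i) (c (i - 1)) ∧ G.Adj (c i) (c (i + 1))) ∧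
    ∃ i, 1 ≤ i ∧ i ≤ k ∧ x = c i

/-!
Along a geodesic of the Cayley tree of `F₂`, the function `g ↦ ‖ρ_λ(g)θ‖²` is convex: if `a ≠ b` are
among `h^{±1}, v^{±1}`, then `2‖y‖² ≤ ‖ρ_λ(a)y‖² + ‖ρ_λ(b)y‖²` for every vector `y`, as soon as
`|λ| ≥ 2`. A convex function on a tree has a global minimum at each of its local minima, and a `θ`
that no generator shrinks is exactly a local minimum at the identity.
-/

/-- Midpoint convexity of a function on the Cayley tree of a free group, where the neighbours of `g`
are the products `mk [t] * g` with a letter `t`: at every vertex, twice the value is at most the sum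
of the values at any two distinct neighbours. -/
def IsTreeConvex {α R : Type*} [AddMonoid R] [LE R] (f : FreeGroup α → R) : Prop :=
  ∀ s t : α × Bool, s ≠ t → ∀ g, 2 • f g ≤ f (FreeGroup.mk [s] * g) + f (FreeGroup.mk [t] * g)

namespace IsTreeConvex

variable {α R : Type*} [AddCommMonoid R] [PartialOrder R] [IsOrderedCancelAddMonoid R]
  {f : FreeGroup α → R}

theorem map_mk_le_map_mk_cons (hf : IsTreeConvex f) (hmin : ∀ t, f 1 ≤ f (FreeGroup.mk [t]))
    {t : α × Bool} {L : List (α × Bool)} (hL : FreeGroup.IsReduced (t :: L)) :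
    f (FreeGroup.mk L) ≤ f (FreeGroup.mk (t :: L)) := by
  induction L generalizing t with
  | nil => exact hmin t
  | cons s L ih =>
    obtain ⟨no_cancel, hsL⟩ := FreeGroup.isReduced_cons_cons.1 hL
    have ne_inv : t ≠ (s.1, !s.2) := by
      rintro rfl
      simp at no_cancel
    have inv_mul : FreeGroup.mk [(s.1, !s.2)] * FreeGroup.mk (s :: L) = FreeGroup.mk L :=
      inv_mul_cancel_left (FreeGroup.mk [s]) (FreeGroup.mk L)
    refine le_of_add_le_add_right (a := f (FreeGroup.mk (s :: L))) ?_
    calc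
      f (FreeGroup.mk (s :: L)) + f (FreeGroup.mk (s :: L))
        ≤ f (FreeGroup.mk (t :: s :: L)) + f (FreeGroup.mk L) := by
          simpa only [two_nsmul, inv_mul, FreeGroup.mul_mk, List.singleton_append] using
            hf t (s.1, !s.2) ne_inv (FreeGroup.mk (s :: L))
      _ ≤ f (FreeGroup.mk (t :: s :: L)) + f (FreeGroup.mk (s :: L)) := by
          gcongr
          exact ih hsL

theorem map_one_le_map_mk (hf : IsTreeConvex f) (hmin : ∀ t, f 1 ≤ f (FreeGroup.mk [t]))
    {L : List (α × Bool)} (hL : FreeGroup.IsReduced L) : f 1 ≤ f (FreeGroup.mk L) := by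
  induction L with
  | nil => rfl
  | cons t L ih => exact (ih (List.IsChain.tail hL)).trans (hf.map_mk_le_map_mk_cons hmin hL)

theorem map_one_le (hf : IsTreeConvex f) (hmin : ∀ t, f 1 ≤ f (FreeGroup.mk [t]))
    (g : FreeGroup α) : f 1 ≤ f g := by
  classical
  simpa only [FreeGroup.mk_toWord] using
    hf.map_one_le_map_mk hmin (FreeGroup.isReduced_toWord (x := g))

end IsTreeConvex

theorem nrm_nonneg (y : Fin 2 → ℝ) : 0 ≤ nrm y :=
  Real.sqrt_nonneg _

theorem nrm_sq (y : Fin 2 → ℝ) : nrm y ^ 2 = y 0 ^ 2 + y 1 ^ 2 :=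
  Real.sq_sqrt (by positivity)

theorem hmat_mulVec (m : ℝ) (y : Fin 2 → ℝ) :
    (hmat m).val.mulVec y = ![y 0 + m * y 1, y 1] := by
  simp [hmat, Matrix.vecHead, Matrix.vecTail]

theorem vmat_mulVec (m : ℝ) (y : Fin 2 → ℝ) :
    (vmat m).val.mulVec y = ![y 0, m * y 0 + y 1] := by
  simp [vmat, Matrix.vecHead, Matrix.vecTail]

theorem nrm_sq_hmat_mulVec (m : ℝ) (y : Fin 2 → ℝ) :
    nrm ((hmat m).val.mulVec y) ^ 2 = nrm y ^ 2 + 2 * m * (y 0 * y 1) + (m * y 1) ^ 2 := by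
  simp only [nrm_sq, hmat_mulVec, Matrix.cons_val_zero, Matrix.cons_val_one]
  ring

theorem nrm_sq_vmat_mulVec (m : ℝ) (y : Fin 2 → ℝ) :
    nrm ((vmat m).val.mulVec y) ^ 2 = nrm y ^ 2 + 2 * m * (y 0 * y 1) + (m * y 0) ^ 2 := by
  simp only [nrm_sq, vmat_mulVec, Matrix.cons_val_zero, Matrix.cons_val_one]
  ring

theorem two_mul_nrm_sq_le_hmat_add_hmat_neg (m : ℝ) (y : Fin 2 → ℝ) :
    2 * nrm y ^ 2 ≤
      nrm ((hmat m).val.mulVec y) ^ 2 + nrm ((hmat (-m)).val.mulVec y) ^ 2 := by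
  rw [nrm_sq_hmat_mulVec, nrm_sq_hmat_mulVec]
  linarith [sq_nonneg (m * y 1), sq_nonneg (-m * y 1)]

theorem two_mul_nrm_sq_le_vmat_add_vmat_neg (m : ℝ) (y : Fin 2 → ℝ) :
    2 * nrm y ^ 2 ≤
      nrm ((vmat m).val.mulVec y) ^ 2 + nrm ((vmat (-m)).val.mulVec y) ^ 2 := by
  rw [nrm_sq_vmat_mulVec, nrm_sq_vmat_mulVec]
  linarith [sq_nonneg (m * y 0), sq_nonneg (-m * y 0)]

theorem abs_add_le_abs_mul_of_two_le_abs {R : Type*} [CommRing R] [LinearOrder R]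
    [IsStrictOrderedRing R] {m n : R} (hm : 2 ≤ |m|) (hn : 2 ≤ |n|) : |m + n| ≤ |m * n| :=
  calc
    |m + n| ≤ |m| + |n| := abs_add_le m n
    _ ≤ |m| * |n| := add_le_mul hm hn
    _ = |m * n| := (abs_mul m n).symm

theorem two_mul_nrm_sq_le_hmat_add_vmat {m n : ℝ} (hmn : |m + n| ≤ |m * n|) (y : Fin 2 → ℝ) :
    2 * nrm y ^ 2 ≤
      nrm ((hmat m).val.mulVec y) ^ 2 + nrm ((vmat n).val.mulVec y) ^ 2 := by
  have cross_term_le : -((m + n) * (y 0 * y 1)) ≤ |m * y 1| * |n * y 0| :=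
    calc
      -((m + n) * (y 0 * y 1)) ≤ |m + n| * |y 0 * y 1| := by
        rw [← abs_mul]
        exact neg_le_abs _
      _ ≤ |m * n| * |y 0 * y 1| := by gcongr
      _ = |m * y 1| * |n * y 0| := by
        rw [← abs_mul, ← abs_mul]
        ring_nf
  have am_gm : 2 * |m * y 1| * |n * y 0| ≤ (m * y 1) ^ 2 + (n * y 0) ^ 2 := by
    simpa only [sq_abs] using two_mul_le_add_sq |m * y 1| |n * y 0|
  rw [nrm_sq_hmat_mulVec, nrm_sq_vmat_mulVec]
  linarith

theorem hmat_inv (m : ℝ) : (hmat m)⁻¹ = hmat (-m) :=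
  Subtype.ext <| (Matrix.SpecialLinearGroup.coe_inv _).trans <| by
    simp [hmat, Matrix.adjugate_fin_two_of]

theorem vmat_inv (m : ℝ) : (vmat m)⁻¹ = vmat (-m) :=
  Subtype.ext <| (Matrix.SpecialLinearGroup.coe_inv _).trans <| by
    simp [vmat, Matrix.adjugate_fin_two_of]

/-- The shear parameter of the letter `(b, e)` under `rho l`: `l` for a generator (`e = true`) and
`-l` for the inverse of a generator (`e = false`). -/
def letterParam (l : ℝ) (e : Bool) : ℝ := if e then l else -l

theorem letterParam_not (l : ℝ) (e : Bool) : letterParam l (!e) = -letterParam l e := by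
  cases e <;> simp [letterParam]

theorem abs_letterParam (l : ℝ) (e : Bool) : |letterParam l e| = |l| := by
  cases e <;> simp [letterParam]

theorem act_one (l : ℝ) (y : Fin 2 → ℝ) : act l 1 y = y := by
  simp [act]

theorem act_mul (l : ℝ) (g k : F2) (y : Fin 2 → ℝ) : act l (g * k) y = act l g (act l k y) := by
  simp only [act, map_mul, Matrix.mulVec_mulVec, Matrix.SpecialLinearGroup.coe_mul]

theorem act_mk_h (l : ℝ) (e : Bool) (y : Fin 2 → ℝ) :
    act l (FreeGroup.mk [(true, e)]) y = (hmat (letterParam l e)).val.mulVec y := by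
  cases e <;> simp [act, rho, letterParam, hmat_inv]

theorem act_mk_v (l : ℝ) (e : Bool) (y : Fin 2 → ℝ) :
    act l (FreeGroup.mk [(false, e)]) y = (vmat (letterParam l e)).val.mulVec y := by
  cases e <;> simp [act, rho, letterParam, vmat_inv]

theorem two_mul_nrm_sq_le_act_add_act {l : ℝ} (hl : 2 ≤ |l|) {s t : Bool × Bool} (hst : s ≠ t)
    (y : Fin 2 → ℝ) :
    2 * nrm y ^ 2 ≤
      nrm (act l (FreeGroup.mk [s]) y) ^ 2 + nrm (act l (FreeGroup.mk [t]) y) ^ 2 := by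
  have params (e e' : Bool) : |letterParam l e + letterParam l e'| ≤
      |letterParam l e * letterParam l e'| :=
    abs_add_le_abs_mul_of_two_le_abs (by rwa [abs_letterParam]) (by rwa [abs_letterParam])
  obtain ⟨b, e⟩ := s
  obtain ⟨b', e'⟩ := t
  have opposite (hb : b = b') : e' = !e :=
    Bool.eq_not.2 fun he => hst (by rw [hb, he])
  cases b <;> cases b' <;> simp only [act_mk_h, act_mk_v]
  case true.true =>
    rw [opposite rfl, letterParam_not]
    exact two_mul_nrm_sq_le_hmat_add_hmat_neg _ y
  case false.false =>
    rw [opposite rfl, letterParam_not]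
    exact two_mul_nrm_sq_le_vmat_add_vmat_neg _ y
  case true.false => exact two_mul_nrm_sq_le_hmat_add_vmat (params e e') y
  case false.true =>
    rw [add_comm]
    exact two_mul_nrm_sq_le_hmat_add_vmat (params e' e) y

theorem isTreeConvex_nrm_sq_act {l : ℝ} (hl : 2 ≤ |l|) (x : Fin 2 → ℝ) :
    IsTreeConvex fun g : F2 => nrm (act l g x) ^ 2 := by
  intro s t hst g
  simpa only [act_mul, nsmul_eq_mul, Nat.cast_ofNat] using
    two_mul_nrm_sq_le_act_add_act hl hst (act l g x)

theorem mk_singleton_mem_gens (t : Bool × Bool) : FreeGroup.mk [t] ∈ gens := by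
  obtain ⟨_ | _, _ | _⟩ := t <;> simp [gens, gh, gv, FreeGroup.of, FreeGroup.invRev]

theorem nrm_le_nrm_act_of_notMem_shrinkSet {l : ℝ} {g : F2} {x : Fin 2 → ℝ} (hx : x ∈ Circ)
    (h : x ∉ ShrinkSet l g) : nrm x ≤ nrm (act l g x) := by
  have nrm_eq_one : nrm x = 1 := hx
  rw [nrm_eq_one]
  exact not_lt.1 fun hlt => h ⟨hx, hlt⟩

theorem forall_mem_gens_nrm_le_nrm_act {l : ℝ} {x : Fin 2 → ℝ} (hx : x ∈ Circ)
    (h : x ∉ ShrinkSet l gh ∪ ShrinkSet l gh⁻¹ ∪ ShrinkSet l gv ∪ ShrinkSet l gv⁻¹) :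
    ∀ s ∈ gens, nrm x ≤ nrm (act l s x) := by
  simp only [Set.mem_union, not_or] at h
  obtain ⟨⟨⟨not_h, not_h_inv⟩, not_v⟩, not_v_inv⟩ := h
  rintro s (rfl | rfl | rfl | rfl) <;>
    exact nrm_le_nrm_act_of_notMem_shrinkSet hx (by assumption)

theorem stmt4_general {l : ℝ} (hl : 2 ≤ |l|) {x : Fin 2 → ℝ}
    (h : ∀ s ∈ gens, nrm x ≤ nrm (act l s x)) (g : F2) : nrm x ≤ nrm (act l g x) := by
  have local_min (t : Bool × Bool) :
      nrm (act l 1 x) ^ 2 ≤ nrm (act l (FreeGroup.mk [t]) x) ^ 2 := by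
    rw [act_one, sq_le_sq₀ (nrm_nonneg _) (nrm_nonneg _)]
    exact h _ (mk_singleton_mem_gens t)
  have global_min := (isTreeConvex_nrm_sq_act hl x).map_one_le local_min g
  rwa [act_one, sq_le_sq₀ (nrm_nonneg _) (nrm_nonneg _)] at global_min

theorem stmt4 (l : ℝ) (hl : 2 ≤ l) (x : Fin 2 → ℝ) (hx : x ∈ Circ)
    (h : x ∉ ShrinkSet l gh ∪ ShrinkSet l gh⁻¹ ∪ ShrinkSet l gv ∪ ShrinkSet l gv⁻¹) :
    ∀ g : F2, nrm x ≤ nrm (act l g x) :=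
  stmt4_general (hl.trans (le_abs_self l)) (forall_mem_gens_nrm_le_nrm_act hx h)
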